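/- Let b ≤ d and b' ≤ d' be real numbers and set η := max(|b − b'|, |d − d'|). If η ≤ 1, then ω(T(b,d) Δ T(b',d')) ≤ 2(d − b + 1)·η. -/

import Mathlib

open MeasureTheory

/-- The triangular region `T(b,d) = {(x,y) : b ≤ x ≤ y ≤ d}` in the plane. -/
def Tri (b d : ℝ) : Set (ℝ × ℝ) := {q | b ≤ q.1 ∧ q.1 ≤ q.2 ∧ q.2 ≤ d}

theorem Tri_meas (b d : ℝ) : MeasurableSet (Tri b d) := by
  have : IsClosed (Tri b d) := by
    unfold Tri
    exact (isClosed_le continuous_const continuous_fst).inter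
      ((isClosed_le continuous_fst continuous_snd).inter
        (isClosed_le continuous_snd continuous_const))
  exact this.measurableSet

theorem Tri_vol (b d : ℝ) (h : b ≤ d) :
    volume (Tri b d) = ENNReal.ofReal ((d - b) ^ 2 / 2) := by
  rw [Measure.volume_eq_prod, Measure.prod_apply (Tri_meas b d)]
  have h1 : ∀ x, volume (Prod.mk x ⁻¹' Tri b d)
      = (Set.Icc b d).indicator (fun x => ENNReal.ofReal (d - x)) x := by
    intro x
    by_cases hx : x ∈ Set.Icc b d
    · rw [Set.indicator_of_mem hx, ← Real.volume_Icc]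
      congr 1
      ext y
      simp [Tri, hx.1]
    · rw [Set.indicator_of_notMem hx]
      have : Prod.mk x ⁻¹' Tri b d = ∅ := by
        ext y
        simp only [Tri, Set.mem_preimage, Set.mem_setOf_eq, Set.mem_empty_iff_false, iff_false]
        rintro ⟨h1, h2, h3⟩
        exact hx ⟨h1, h2.trans h3⟩
      rw [this, measure_empty]
  simp_rw [h1]
  rw [lintegral_indicator measurableSet_Icc, ← ofReal_integral_eq_lintegral_ofReal]
  · rw [integral_Icc_eq_integral_Ioc, ← intervalIntegral.integral_of_le h]
    congr 1
    rw [intervalIntegral.integral_sub (by simp) (by simp)]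
    simp
    ring
  · exact (Continuous.continuousOn (by fun_prop)).integrableOn_Icc
  · filter_upwards [ae_restrict_mem measurableSet_Icc] with x hx
    simpa using hx.2

theorem Tri_real (b d : ℝ) : volume.real (Tri b d) = (max (d - b) 0) ^ 2 / 2 := by
  rcases le_total b d with h | h
  · rw [measureReal_def, Tri_vol b d h, ENNReal.toReal_ofReal (by positivity),
      max_eq_left (by linarith)]
  · have hs : Tri b d ⊆ Tri b b := fun q hq => ⟨hq.1, hq.2.1, hq.2.2.trans h⟩
    have : volume (Tri b d) = 0 := measure_mono_null hs (by rw [Tri_vol b b le_rfl]; simp)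
    rw [measureReal_def, this, max_eq_right (by linarith)]
    simp

theorem Tri_fin (b d : ℝ) : volume (Tri b d) ≠ ⊤ := by
  have hs : Tri b d ⊆ Tri b (max b d) :=
    fun q hq => ⟨hq.1, hq.2.1, hq.2.2.trans (le_max_right _ _)⟩
  refine measure_ne_top_of_subset hs ?_
  rw [Tri_vol _ _ (le_max_left _ _)]
  exact ENNReal.ofReal_ne_top

theorem Tri_inter (b d b' d' : ℝ) :
    Tri b d ∩ Tri b' d' = Tri (max b b') (min d d') := by
  ext q
  simp only [Tri, Set.mem_inter_iff, Set.mem_setOf_eq, max_le_iff, le_min_iff]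
  tauto

theorem Tri_arith (b d b' d' : ℝ) (h : b ≤ d) (h' : b' ≤ d') (e : ℝ)
    (he : e ≤ 1) (h1 : |b - b'| ≤ e) (h2 : |d - d'| ≤ e) :
    (d - b) ^ 2 / 2 + (d' - b') ^ 2 / 2 - (max (min d d' - max b b') 0) ^ 2
      ≤ 2 * (d - b + 1) * e := by
  have he0 : 0 ≤ e := (abs_nonneg _).trans h1
  rw [abs_le] at h1 h2
  obtain ⟨h1, h3⟩ := h1
  obtain ⟨h2, h4⟩ := h2
  have hee : e * e ≤ e := by nlinarith
  rcases le_total b b' with hb | hb <;> rcases le_total d d' with hd | hd <;>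
    simp only [hb, hd, max_eq_left, max_eq_right, min_eq_left, min_eq_right]
  · rcases le_total (d - b') 0 with hm | hm
    · rw [max_eq_right hm]
      nlinarith
    · rw [max_eq_left hm]
      nlinarith
  · rw [max_eq_left (by linarith)]
    nlinarith
  · rw [max_eq_left (by linarith)]
    nlinarith
  · rcases le_total (d' - b) 0 with hm | hm
    · rw [max_eq_right hm]
      nlinarith
    · rw [max_eq_left hm]
      nlinarith

/-- With `η = max(|b − b'|, |d − d'|) ≤ 1`, the Lebesgue measure of the symmetric
difference of the triangles `T(b,d)` and `T(b',d')` is at most `2(d − b + 1)·η`. -/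
theorem stmt_3 (b d b' d' : ℝ) (h : b ≤ d) (h' : b' ≤ d')
    (hη : max |b - b'| |d - d'| ≤ 1) :
    volume (symmDiff (Tri b d) (Tri b' d'))
      ≤ ENNReal.ofReal (2 * (d - b + 1) * max |b - b'| |d - d'|) := by
  have key := Tri_arith b d b' d' h h' _ hη (le_max_left _ _) (le_max_right _ _)
  have e1 := measureReal_sdiff_add_inter (μ := volume) (s := Tri b d) (Tri_meas b' d')
    (Tri_fin b d)
  have e2 := measureReal_sdiff_add_inter (μ := volume) (s := Tri b' d') (Tri_meas b d)
    (Tri_fin b' d')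
  rw [Set.inter_comm] at e2
  rw [Tri_inter, Tri_real, Tri_real] at e1 e2
  rw [max_eq_left (sub_nonneg.2 h)] at e1
  rw [max_eq_left (sub_nonneg.2 h')] at e2
  have f1 : volume (Tri b d \ Tri b' d') ≠ ⊤ :=
    measure_ne_top_of_subset Set.diff_subset (Tri_fin b d)
  have f2 : volume (Tri b' d' \ Tri b d) ≠ ⊤ :=
    measure_ne_top_of_subset Set.diff_subset (Tri_fin b' d')
  rw [Set.symmDiff_def]
  refine (measure_union_le _ _).trans ?_
  rw [← ofReal_measureReal f1, ← ofReal_measureReal f2,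
    ← ENNReal.ofReal_add measureReal_nonneg measureReal_nonneg]
  apply ENNReal.ofReal_le_ofReal
  linarith
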